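/- Assume ‖x_t‖² ≤ X² and |y_t| ≤ Y for all t, with X > 0. Fix T ≥ 1, a comparator sequence u_1, …, u_T ∈ ℝ^d with total drift V = Σ_{t=1}^{T-1} ‖u_{t+1} − u_t‖² > 0, and 0 < ε < 1. Set c = (√2·T·Y²·d·X / V)^{2/3}, b = ε·c, and μ = max{ (9/8)·X², (b + X²)²/(8X²) }. If V ≤ T·√2·Y²·d·X / μ^{3/2}, then L_T(LASER) ≤ b‖u_1‖² + 3·(√2·Y²·d·X)^{2/3}·T^{2/3}·V^{1/3} + (ε/(1−ε))·Y²·d + L_T({u_t}) + Y²·ln det((1/b)·D_T), where L_T({u_t}) = Σ_{t=1}^{T} (y_t − u_tᵀ x_t)². -/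

import Mathlib

open Matrix Finset

/-- `D₀ = (bc/(c−b)) I`, `D_t = (D_{t-1}⁻¹ + c⁻¹ I)⁻¹ + x_t x_tᵀ` for `t ≥ 1`. -/
noncomputable def Dmat (d : ℕ) (b c : ℝ) (x : ℕ → Fin d → ℝ) :
    ℕ → Matrix (Fin d) (Fin d) ℝ
  | 0 => (b * c / (c - b)) • 1
  | (t + 1) => ((Dmat d b c x t)⁻¹ + c⁻¹ • 1)⁻¹ + vecMulVec (x (t + 1)) (x (t + 1))

/-- `e₀ = 0`, `e_t = (I + c⁻¹ D_{t-1})⁻¹ e_{t-1} + y_t x_t` for `t ≥ 1`. -/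
noncomputable def evec (d : ℕ) (b c : ℝ) (x : ℕ → Fin d → ℝ) (y : ℕ → ℝ) :
    ℕ → Fin d → ℝ
  | 0 => 0
  | (t + 1) => (1 + c⁻¹ • Dmat d b c x t)⁻¹ *ᵥ evec d b c x y t + y (t + 1) • x (t + 1)

/-- LASER prediction at round `t + 1`:
`ŷ_{t+1} = x_{t+1}ᵀ D_{t+1}⁻¹ (I + c⁻¹ D_t)⁻¹ e_t`. -/
noncomputable def laserPred (d : ℕ) (b c : ℝ) (x : ℕ → Fin d → ℝ) (y : ℕ → ℝ)
    (t : ℕ) : ℝ :=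
  x (t + 1) ⬝ᵥ ((Dmat d b c x (t + 1))⁻¹ *ᵥ
    ((1 + c⁻¹ • Dmat d b c x t)⁻¹ *ᵥ evec d b c x y t))

/-- Cumulative squared loss of LASER over `T` rounds. -/
noncomputable def laserLoss (d : ℕ) (b c : ℝ) (x : ℕ → Fin d → ℝ) (y : ℕ → ℝ)
    (T : ℕ) : ℝ :=
  ∑ t ∈ Finset.range T, (y (t + 1) - laserPred d b c x y t) ^ 2

/-!
LASER is ridge regression in which, between rounds, the precision matrix `D` is replaced by the
parallel sum `P` of `D` and `c I`. By the variational bound for parallel sums, passing from the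
comparator `u` to `u'` costs at most `c ‖u' - u‖²` when the distance to the ridge estimate is
measured by `P` instead of `D`. One ridge step started from `P` loses, relative to the comparator,
at most `y²` times the leverage of the new input, which is at most the increase of `log det` from
`P` to the next `D`. The telescoping is broken only by the losses `log det D - log det P`, each at
most `tr D / c`; these are controlled by a bound `D ≤ M I` preserved by the recursion. In the
low-drift regime `M = √8 X √c` is such a bound, and the stated `c` balances the drift cost `c V`
against the loss in `log det`.
-/

section QuadraticForm

variable {n : Type*} [Fintype n]

/-- The quadratic form `vᵀ A v` of a real matrix, used as the squared distance induced by `A`. -/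
def quadForm (A : Matrix n n ℝ) (v : n → ℝ) : ℝ :=
  v ⬝ᵥ (A *ᵥ v)

theorem dotProduct_mulVec_comm {A : Matrix n n ℝ} (hA : A.IsHermitian) (v w : n → ℝ) :
    v ⬝ᵥ (A *ᵥ w) = w ⬝ᵥ (A *ᵥ v) := by
  have hAt : Aᵀ = A := (conjTranspose_eq_transpose_of_trivial A).symm.trans hA
  rw [dotProduct_mulVec, ← mulVec_transpose, hAt, dotProduct_comm]

theorem quadForm_nonneg {A : Matrix n n ℝ} (hA : A.PosSemidef) (v : n → ℝ) :
    0 ≤ quadForm A v := by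
  simpa only [quadForm, star_trivial] using hA.dotProduct_mulVec_nonneg v

theorem quadForm_add_left (A B : Matrix n n ℝ) (v : n → ℝ) :
    quadForm (A + B) v = quadForm A v + quadForm B v := by
  simp only [quadForm, add_mulVec, dotProduct_add]

theorem quadForm_add_right {A : Matrix n n ℝ} (hA : A.IsHermitian) (v w : n → ℝ) :
    quadForm A (v + w) = quadForm A v + 2 * (v ⬝ᵥ (A *ᵥ w)) + quadForm A w := by
  simp only [quadForm, mulVec_add, dotProduct_add, add_dotProduct]
  rw [dotProduct_mulVec_comm hA w v]
  ring

theorem quadForm_sub_right {A : Matrix n n ℝ} (hA : A.IsHermitian) (v w : n → ℝ) :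
    quadForm A (v - w) = quadForm A v - 2 * (v ⬝ᵥ (A *ᵥ w)) + quadForm A w := by
  simp only [quadForm, mulVec_sub, dotProduct_sub, sub_dotProduct]
  rw [dotProduct_mulVec_comm hA w v]
  ring

theorem quadForm_smul_right (A : Matrix n n ℝ) (r : ℝ) (v : n → ℝ) :
    quadForm A (r • v) = r ^ 2 * quadForm A v := by
  simp only [quadForm, mulVec_smul, dotProduct_smul, smul_dotProduct, smul_eq_mul]
  ring

theorem vecMulVec_self_mulVec (x v : n → ℝ) : vecMulVec x x *ᵥ v = (x ⬝ᵥ v) • x := by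
  rw [vecMulVec_mulVec, op_smul_eq_smul]

theorem quadForm_vecMulVec_self (x v : n → ℝ) : quadForm (vecMulVec x x) v = (v ⬝ᵥ x) ^ 2 := by
  rw [quadForm, vecMulVec_self_mulVec, dotProduct_smul, smul_eq_mul, dotProduct_comm x v, sq]

theorem sq_dotProduct_le (v w : n → ℝ) : (v ⬝ᵥ w) ^ 2 ≤ (v ⬝ᵥ v) * (w ⬝ᵥ w) := by
  simpa only [dotProduct, ← sq] using Finset.sum_mul_sq_le_sq_mul_sq Finset.univ v w

theorem quadForm_add_vecMulVec_self_le {B : Matrix n n ℝ} {K R : ℝ} {x v : n → ℝ}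
    (hx : x ⬝ᵥ x ≤ R) (hB : quadForm B v ≤ K * (v ⬝ᵥ v)) :
    quadForm (B + vecMulVec x x) v ≤ (K + R) * (v ⬝ᵥ v) := by
  have hvv : 0 ≤ v ⬝ᵥ v := by simpa only [star_trivial] using dotProduct_star_self_nonneg v
  rw [quadForm_add_left, quadForm_vecMulVec_self]
  nlinarith [sq_dotProduct_le v x, mul_le_mul_of_nonneg_left hx hvv]

theorem trace_le_card_mul_of_quadForm_le {A : Matrix n n ℝ} {M : ℝ}
    (hA : ∀ v, quadForm A v ≤ M * (v ⬝ᵥ v)) : A.trace ≤ Fintype.card n * M := by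
  classical
  have hdiag (i : n) : A i i ≤ M := by simpa [quadForm] using hA (Pi.single i 1)
  simpa [Matrix.trace] using Finset.sum_le_sum fun i (_ : i ∈ Finset.univ) => hdiag i

theorem quadForm_smul_one [DecidableEq n] (r : ℝ) (v : n → ℝ) :
    quadForm (r • (1 : Matrix n n ℝ)) v = r * (v ⬝ᵥ v) := by
  rw [quadForm, smul_mulVec, one_mulVec, dotProduct_smul, smul_eq_mul]

end QuadraticForm

section Inverse

variable {n : Type*} [Fintype n] [DecidableEq n]

theorem mulVec_inv_mulVec {R : Type*} [CommRing R] {A : Matrix n n R} (hA : IsUnit A.det)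
    (v : n → R) : A *ᵥ (A⁻¹ *ᵥ v) = v := by
  rw [mulVec_mulVec, mul_nonsing_inv _ hA, one_mulVec]

theorem inv_mulVec_mulVec {R : Type*} [CommRing R] {A : Matrix n n R} (hA : IsUnit A.det)
    (v : n → R) : A⁻¹ *ᵥ (A *ᵥ v) = v := by
  rw [mulVec_mulVec, nonsing_inv_mul _ hA, one_mulVec]

theorem inv_smul_one {K : Type*} [Field K] {r : K} (hr : r ≠ 0) :
    (r • (1 : Matrix n n K))⁻¹ = r⁻¹ • 1 := by
  apply inv_eq_left_inv
  rw [smul_mul_smul_comm, Matrix.one_mul, inv_mul_cancel₀ hr, one_smul]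

theorem isUnit_det_of_posDef {A : Matrix n n ℝ} (hA : A.PosDef) : IsUnit A.det :=
  hA.det_pos.ne'.isUnit

theorem log_det_smul {A : Matrix n n ℝ} (hA : A.det ≠ 0) {r : ℝ} (hr : r ≠ 0) :
    Real.log (r • A).det = Fintype.card n * Real.log r + Real.log A.det := by
  rw [det_smul, Real.log_mul (pow_ne_zero _ hr) hA, Real.log_pow]

theorem log_det_le_trace_sub_card {A : Matrix n n ℝ} (hA : A.PosDef) :
    Real.log A.det ≤ A.trace - Fintype.card n := by
  rw [hA.isHermitian.det_eq_prod_eigenvalues, hA.isHermitian.trace_eq_sum_eigenvalues]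
  simp only [RCLike.ofReal_real_eq_id, id]
  rw [Real.log_prod fun i _ => (hA.eigenvalues_pos i).ne']
  calc ∑ i, Real.log (hA.isHermitian.eigenvalues i)
      ≤ ∑ i, (hA.isHermitian.eigenvalues i - 1) :=
        Finset.sum_le_sum fun i _ => Real.log_le_sub_one_of_pos (hA.eigenvalues_pos i)
    _ = ∑ i, hA.isHermitian.eigenvalues i - Fintype.card n := by simp

theorem det_add_vecMulVec {R : Type*} [CommRing R] {A : Matrix n n R} (hA : IsUnit A.det)
    (v w : n → R) : (A + vecMulVec v w).det = A.det * (1 + w ⬝ᵥ (A⁻¹ *ᵥ v)) := by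
  rw [vecMulVec_eq Unit, det_add_replicateCol_mul_replicateRow hA, det_unique (n := Unit),
    Matrix.mul_assoc, ← replicateCol_mulVec, replicateRow_mul_replicateCol]
  simp

end Inverse

section ParallelSum

variable {n : Type*} [Fintype n] [DecidableEq n]

/-- The parallel sum `(A⁻¹ + B⁻¹)⁻¹`, i.e. the precision matrix of a sum of independent
quantities with precision matrices `A` and `B`. It is meaningful only for invertible `A`, `B` and
`A⁻¹ + B⁻¹`, since the inverse of a singular matrix is `0` by convention. -/
noncomputable def parallelSum (A B : Matrix n n ℝ) : Matrix n n ℝ :=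
  (A⁻¹ + B⁻¹)⁻¹

variable {A B : Matrix n n ℝ}

theorem posDef_parallelSum (hA : A.PosDef) (hB : B.PosDef) : (parallelSum A B).PosDef :=
  (hA.inv.add hB.inv).inv

-- For fixed `v + w`, with image `z` under the parallel sum, the right-hand side is minimised at
-- `v = A⁻¹ z`, `w = B⁻¹ z`, where equality holds; moving `v` by `k` and `w` by `-k` adds
-- `kᵀ A k + kᵀ B k`.
theorem quadForm_parallelSum_add_le (hA : A.PosDef) (hB : B.PosDef) (v w : n → ℝ) :
    quadForm (parallelSum A B) (v + w) ≤ quadForm A v + quadForm B w := by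
  obtain ⟨z, hz⟩ : ∃ z, parallelSum A B *ᵥ (v + w) = z := ⟨_, rfl⟩
  have hAz : A *ᵥ (A⁻¹ *ᵥ z) = z := mulVec_inv_mulVec (isUnit_det_of_posDef hA) z
  have hBz : B *ᵥ (B⁻¹ *ᵥ z) = z := mulVec_inv_mulVec (isUnit_det_of_posDef hB) z
  have hsum : v + w = A⁻¹ *ᵥ z + B⁻¹ *ᵥ z := by
    rw [← add_mulVec, ← hz, parallelSum,
      mulVec_inv_mulVec (isUnit_det_of_posDef (hA.inv.add hB.inv))]
  obtain ⟨k, hv⟩ : ∃ k, v = A⁻¹ *ᵥ z + k := ⟨v - A⁻¹ *ᵥ z, by abel⟩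
  have hw : w = B⁻¹ *ᵥ z - k := by
    rw [eq_sub_of_add_eq' hsum, hv]
    abel
  have hlhs : quadForm (parallelSum A B) (v + w) =
      quadForm A (A⁻¹ *ᵥ z) + quadForm B (B⁻¹ *ᵥ z) := by
    rw [quadForm, hz, hsum, quadForm, quadForm, hAz, hBz, add_dotProduct]
  rw [hlhs, hv, hw, quadForm_add_right hA.isHermitian, quadForm_sub_right hB.isHermitian,
    dotProduct_mulVec_comm hA.isHermitian _ k, dotProduct_mulVec_comm hB.isHermitian _ k, hAz, hBz]
  linarith [quadForm_nonneg hA.posSemidef k, quadForm_nonneg hB.posSemidef k]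

theorem quadForm_parallelSum_le (hA : A.PosDef) (hB : B.PosDef) {M N : ℝ} (hMN : M + N ≠ 0)
    {v : n → ℝ} (hAM : quadForm A v ≤ M * (v ⬝ᵥ v)) (hBN : quadForm B v ≤ N * (v ⬝ᵥ v)) :
    quadForm (parallelSum A B) v ≤ M * N / (M + N) * (v ⬝ᵥ v) := by
  have hsplit : v = (N / (M + N)) • v + (M / (M + N)) • v := by
    rw [← add_smul, ← add_div, add_comm N M, div_self hMN, one_smul]
  calc quadForm (parallelSum A B) v
      ≤ (N / (M + N)) ^ 2 * quadForm A v + (M / (M + N)) ^ 2 * quadForm B v := by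
        conv_lhs => rw [hsplit]
        rw [← quadForm_smul_right, ← quadForm_smul_right]
        exact quadForm_parallelSum_add_le hA hB _ _
    _ ≤ (N / (M + N)) ^ 2 * (M * (v ⬝ᵥ v)) + (M / (M + N)) ^ 2 * (N * (v ⬝ᵥ v)) := by gcongr
    _ = M * N / (M + N) * (v ⬝ᵥ v) := by field_simp; ring

theorem parallelSum_smul_one_smul_one {r s : ℝ} (hr : r ≠ 0) (hs : s ≠ 0) (hrs : r + s ≠ 0) :
    parallelSum (r • (1 : Matrix n n ℝ)) (s • 1) = (r * s / (r + s)) • 1 := by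
  have hinv : r⁻¹ + s⁻¹ = (r * s / (r + s))⁻¹ := by field_simp; ring
  rw [parallelSum, inv_smul_one hr, inv_smul_one hs, ← add_smul, hinv,
    inv_smul_one (by positivity), inv_inv]

theorem parallelSum_smul_one (hA : A.PosDef) {c : ℝ} (hc : 0 < c) :
    parallelSum A (c • 1) = (1 + c⁻¹ • A)⁻¹ * A := by
  have hG : (1 + c⁻¹ • A).PosDef := PosDef.one.add (hA.smul (inv_pos.2 hc))
  rw [parallelSum, inv_smul_one hc.ne']
  apply inv_eq_left_inv
  rw [Matrix.mul_assoc, Matrix.mul_add, mul_nonsing_inv _ (isUnit_det_of_posDef hA),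
    Matrix.mul_smul, Matrix.mul_one, nonsing_inv_mul _ (isUnit_det_of_posDef hG)]

theorem log_det_sub_trace_div_le_log_det_parallelSum (hA : A.PosDef) {c : ℝ} (hc : 0 < c) :
    Real.log A.det - A.trace / c ≤ Real.log (parallelSum A (c • 1)).det := by
  have hG : (1 + c⁻¹ • A).PosDef := PosDef.one.add (hA.smul (inv_pos.2 hc))
  have hlog : Real.log (1 + c⁻¹ • A).det ≤ A.trace / c := by
    have htrace : (1 + c⁻¹ • A).trace = Fintype.card n + A.trace / c := by
      rw [trace_add, trace_one, trace_smul, smul_eq_mul, inv_mul_eq_div]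
    linarith [log_det_le_trace_sub_card hG]
  rw [parallelSum_smul_one hA hc, det_mul, det_nonsing_inv, Ring.inverse_eq_inv',
    Real.log_mul (inv_ne_zero hG.det_pos.ne') hA.det_pos.ne', Real.log_inv]
  linarith

end ParallelSum

section RidgeStep

variable {n : Type*}

theorem posDef_add_vecMulVec_self [Finite n] {B : Matrix n n ℝ} (hB : B.PosDef) (x : n → ℝ) :
    (B + vecMulVec x x).PosDef :=
  hB.add_posSemidef (by simpa only [star_trivial] using posSemidef_vecMulVec_self_star x)

variable [Fintype n] [DecidableEq n] {B : Matrix n n ℝ}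

/-- The leverage `xᵀ (B + x xᵀ)⁻¹ x` of the input `x` after it has been added to the precision
matrix `B`. -/
noncomputable def leverage (B : Matrix n n ℝ) (x : n → ℝ) : ℝ :=
  x ⬝ᵥ ((B + vecMulVec x x)⁻¹ *ᵥ x)

theorem leverage_nonneg (hB : B.PosDef) (x : n → ℝ) : 0 ≤ leverage B x :=
  quadForm_nonneg (posDef_add_vecMulVec_self hB x).inv.posSemidef x

theorem det_eq_det_add_vecMulVec_self_mul {x : n → ℝ} (hA : IsUnit (B + vecMulVec x x).det) :
    B.det = (B + vecMulVec x x).det * (1 - leverage B x) := by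
  have hdet := det_add_vecMulVec hA (-x) x
  rwa [neg_vecMulVec, add_neg_cancel_right, mulVec_neg, dotProduct_neg, ← sub_eq_add_neg] at hdet

theorem leverage_lt_one (hB : B.PosDef) (x : n → ℝ) : leverage B x < 1 := by
  have hA := posDef_add_vecMulVec_self hB x
  have hprod := hB.det_pos
  rw [det_eq_det_add_vecMulVec_self_mul (isUnit_det_of_posDef hA)] at hprod
  exact sub_pos.1 (pos_of_mul_pos_right hprod hA.det_pos.le)

theorem leverage_le_log_det_sub (hB : B.PosDef) (x : n → ℝ) :
    leverage B x ≤ Real.log (B + vecMulVec x x).det - Real.log B.det := by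
  have hA := posDef_add_vecMulVec_self hB x
  have hlev : 0 < 1 - leverage B x := sub_pos.2 (leverage_lt_one hB x)
  rw [det_eq_det_add_vecMulVec_self_mul (isUnit_det_of_posDef hA),
    Real.log_mul hA.det_pos.ne' hlev.ne']
  linarith [Real.log_le_sub_one_of_pos hlev]

theorem inv_add_vecMulVec_self_mulVec {x : n → ℝ} (hA : IsUnit (B + vecMulVec x x).det)
    (m : n → ℝ) (r : ℝ) :
    (B + vecMulVec x x)⁻¹ *ᵥ (B *ᵥ m + r • x) =
      m + (r - m ⬝ᵥ x) • ((B + vecMulVec x x)⁻¹ *ᵥ x) := by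
  have hsplit : B *ᵥ m + r • x = (B + vecMulVec x x) *ᵥ m + (r - m ⬝ᵥ x) • x := by
    rw [add_mulVec, vecMulVec_self_mulVec, dotProduct_comm x m, sub_smul]
    abel
  rw [hsplit, mulVec_add, mulVec_smul, inv_mulVec_mulVec hA]

theorem quadForm_add_sq_sub_dotProduct (hB : B.PosDef) (x v : n → ℝ) (r : ℝ) :
    quadForm B v + (r - v ⬝ᵥ x) ^ 2 =
      quadForm (B + vecMulVec x x) (v - r • ((B + vecMulVec x x)⁻¹ *ᵥ x)) +
        r ^ 2 * (1 - leverage B x) := by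
  have hA := posDef_add_vecMulVec_self hB x
  have hAx := mulVec_inv_mulVec (isUnit_det_of_posDef hA) x
  have hlev : quadForm (B + vecMulVec x x) ((B + vecMulVec x x)⁻¹ *ᵥ x) = leverage B x := by
    rw [quadForm, hAx, dotProduct_comm, leverage]
  rw [quadForm_sub_right hA.isHermitian, quadForm_smul_right, hlev, mulVec_smul, hAx,
    dotProduct_smul, smul_eq_mul, quadForm_add_left, quadForm_vecMulVec_self]
  ring

-- Writing `k` for the leverage, the prediction is `(1 - k) m ⬝ x`, so the two sides differ by
-- `(m ⬝ x)² k (1 - k)`.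
theorem ridge_step_le (hB : B.PosDef) (x m u : n → ℝ) (y : ℝ) :
    (y - x ⬝ᵥ ((B + vecMulVec x x)⁻¹ *ᵥ (B *ᵥ m))) ^ 2 +
        quadForm (B + vecMulVec x x) (u - (B + vecMulVec x x)⁻¹ *ᵥ (B *ᵥ m + y • x)) ≤
      quadForm B (u - m) + (y - u ⬝ᵥ x) ^ 2 + y ^ 2 * leverage B x := by
  have hA : IsUnit (B + vecMulVec x x).det := isUnit_det_of_posDef (posDef_add_vecMulVec_self hB x)
  have hpred : x ⬝ᵥ ((B + vecMulVec x x)⁻¹ *ᵥ (B *ᵥ m)) = (1 - leverage B x) * (m ⬝ᵥ x) := by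
    have hmean := inv_add_vecMulVec_self_mulVec hA m 0
    rw [zero_smul, add_zero] at hmean
    rw [hmean, dotProduct_add, dotProduct_smul, smul_eq_mul, dotProduct_comm x m, leverage]
    ring
  have hcomplete := quadForm_add_sq_sub_dotProduct hB x (u - m) (y - m ⬝ᵥ x)
  rw [sub_dotProduct, sub_sub_sub_cancel_right, sub_sub,
    ← inv_add_vecMulVec_self_mulVec hA] at hcomplete
  have hgap : 0 ≤ (m ⬝ᵥ x) ^ 2 * (leverage B x * (1 - leverage B x)) :=
    mul_nonneg (sq_nonneg _)
      (mul_nonneg (leverage_nonneg hB x) (sub_nonneg.2 (leverage_lt_one hB x).le))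
  rw [hcomplete, hpred]
  linarith

end RidgeStep

section Laser

variable {d : ℕ}

/-- The precision matrix with which LASER enters round `t + 1`: the parallel sum of `D_t` with
`c I`, which discounts `D_t` for a possible move of the comparator. -/
noncomputable def laserPrior (d : ℕ) (b c : ℝ) (x : ℕ → Fin d → ℝ) (t : ℕ) :
    Matrix (Fin d) (Fin d) ℝ :=
  parallelSum (Dmat d b c x t) (c • 1)

/-- The ridge estimate `D_t⁻¹ e_t` of LASER after `t` rounds. -/
noncomputable def laserMean (d : ℕ) (b c : ℝ) (x : ℕ → Fin d → ℝ) (y : ℕ → ℝ) (t : ℕ) :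
    Fin d → ℝ :=
  (Dmat d b c x t)⁻¹ *ᵥ evec d b c x y t

/-- The cumulative squared loss of the comparator sequence `u_1, …, u_t`. -/
def comparatorLoss (x : ℕ → Fin d → ℝ) (y : ℕ → ℝ) (u : ℕ → Fin d → ℝ) (t : ℕ) : ℝ :=
  ∑ s ∈ Finset.range t, (y (s + 1) - u (s + 1) ⬝ᵥ x (s + 1)) ^ 2

/-- The total squared drift of the comparator sequence `u_1, …, u_{t+1}`; the argument `t` counts
the moves. -/
def drift (u : ℕ → Fin d → ℝ) (t : ℕ) : ℝ :=
  ∑ s ∈ Finset.range t, (u (s + 2) - u (s + 1)) ⬝ᵥ (u (s + 2) - u (s + 1))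

variable {b c M X Y : ℝ} {x : ℕ → Fin d → ℝ} {y : ℕ → ℝ}

theorem Dmat_succ (hc : c ≠ 0) (t : ℕ) :
    Dmat d b c x (t + 1) = laserPrior d b c x t + vecMulVec (x (t + 1)) (x (t + 1)) := by
  rw [laserPrior, parallelSum, inv_smul_one hc, Dmat]

theorem posDef_Dmat (hb : 0 < b) (hbc : b < c) (t : ℕ) : (Dmat d b c x t).PosDef := by
  have hc : 0 < c := hb.trans hbc
  induction t with
  | zero => exact PosDef.one.smul (div_pos (mul_pos hb hc) (sub_pos.2 hbc))
  | succ t ih =>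
    rw [Dmat_succ hc.ne']
    exact posDef_add_vecMulVec_self (posDef_parallelSum ih (PosDef.one.smul hc)) _

theorem posDef_laserPrior (hb : 0 < b) (hbc : b < c) (t : ℕ) : (laserPrior d b c x t).PosDef :=
  posDef_parallelSum (posDef_Dmat hb hbc t) (PosDef.one.smul (hb.trans hbc))

theorem laserPrior_zero (hb : 0 < b) (hbc : b < c) : laserPrior d b c x 0 = b • 1 := by
  have hc : 0 < c := hb.trans hbc
  have hcb : 0 < c - b := sub_pos.2 hbc
  have hb' : b * c / (c - b) * c / (b * c / (c - b) + c) = b := by field_simp; ring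
  rw [laserPrior, Dmat, parallelSum_smul_one_smul_one (by positivity) hc.ne' (by positivity), hb']

theorem laserPrior_mulVec_laserMean (hb : 0 < b) (hbc : b < c) (t : ℕ) :
    laserPrior d b c x t *ᵥ laserMean d b c x y t =
      (1 + c⁻¹ • Dmat d b c x t)⁻¹ *ᵥ evec d b c x y t := by
  have hD : (Dmat d b c x t).PosDef := posDef_Dmat hb hbc t
  rw [laserPrior, parallelSum_smul_one hD (hb.trans hbc), laserMean, ← mulVec_mulVec,
    mulVec_inv_mulVec (isUnit_det_of_posDef hD)]

theorem laser_round_le (hb : 0 < b) (hbc : b < c) {t : ℕ} (hy : |y (t + 1)| ≤ Y)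
    (u : Fin d → ℝ) :
    (y (t + 1) - laserPred d b c x y t) ^ 2 +
        quadForm (Dmat d b c x (t + 1)) (u - laserMean d b c x y (t + 1)) ≤
      quadForm (laserPrior d b c x t) (u - laserMean d b c x y t) +
        (y (t + 1) - u ⬝ᵥ x (t + 1)) ^ 2 +
        Y ^ 2 * (Real.log (Dmat d b c x (t + 1)).det - Real.log (laserPrior d b c x t).det) := by
  have hP : (laserPrior d b c x t).PosDef := posDef_laserPrior hb hbc t
  have hy2 : y (t + 1) ^ 2 ≤ Y ^ 2 := sq_le_sq' (abs_le.1 hy).1 (abs_le.1 hy).2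
  have hlev := mul_le_mul hy2 (leverage_le_log_det_sub hP (x (t + 1)))
    (leverage_nonneg hP (x (t + 1))) (sq_nonneg Y)
  have hstep := ridge_step_le hP (x (t + 1)) (laserMean d b c x y t) u (y (t + 1))
  rw [laserPrior_mulVec_laserMean hb hbc] at hstep
  rw [laserPred, laserMean, evec, Dmat_succ (hb.trans hbc).ne']
  exact hstep.trans (add_le_add_right hlev _)

theorem quadForm_laserPrior_sub_le (hb : 0 < b) (hbc : b < c) (t : ℕ) (u u' m : Fin d → ℝ) :
    quadForm (laserPrior d b c x t) (u' - m) ≤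
      quadForm (Dmat d b c x t) (u - m) + c * ((u' - u) ⬝ᵥ (u' - u)) := by
  rw [← quadForm_smul_one, ← sub_add_sub_cancel' u m u']
  exact quadForm_parallelSum_add_le (posDef_Dmat hb hbc t) (PosDef.one.smul (hb.trans hbc)) _ _

-- `hM` says that `D ≤ M I` is preserved by `D ↦ (D⁻¹ + c⁻¹ I)⁻¹ + x xᵀ`.
theorem quadForm_Dmat_succ_le (hb : 0 < b) (hbc : b < c) (hbM : b + X ^ 2 ≤ M)
    (hM : M * c / (M + c) + X ^ 2 ≤ M) {t : ℕ}
    (hx : ∀ s ≤ t, x (s + 1) ⬝ᵥ x (s + 1) ≤ X ^ 2) (v : Fin d → ℝ) :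
    quadForm (Dmat d b c x (t + 1)) v ≤ M * (v ⬝ᵥ v) := by
  have hc : 0 < c := hb.trans hbc
  have hM0 : 0 < M := by nlinarith [sq_nonneg X]
  have hvv : 0 ≤ v ⬝ᵥ v := by simpa only [star_trivial] using dotProduct_star_self_nonneg v
  rw [Dmat_succ hc.ne']
  induction t with
  | zero =>
    refine (quadForm_add_vecMulVec_self_le (hx 0 le_rfl) (K := b) ?_).trans (by gcongr)
    rw [laserPrior_zero hb hbc, quadForm_smul_one]
  | succ t ih =>
    refine (quadForm_add_vecMulVec_self_le (hx _ le_rfl) (K := M * c / (M + c)) ?_).trans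
      (by gcongr)
    refine quadForm_parallelSum_le (posDef_Dmat hb hbc _) (PosDef.one.smul hc) (by positivity) ?_
      (quadForm_smul_one c v).le
    rw [Dmat_succ hc.ne']
    exact ih fun s hs => hx s (Nat.le_succ_of_le hs)

theorem log_det_Dmat_succ_le (hb : 0 < b) (hbc : b < c) (hbM : b + X ^ 2 ≤ M)
    (hM : M * c / (M + c) + X ^ 2 ≤ M) {t : ℕ}
    (hx : ∀ s ≤ t, x (s + 1) ⬝ᵥ x (s + 1) ≤ X ^ 2) :
    Real.log (Dmat d b c x (t + 1)).det ≤
      Real.log (laserPrior d b c x (t + 1)).det + d * M / c := by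
  have hc : 0 < c := hb.trans hbc
  have htrace := trace_le_card_mul_of_quadForm_le (quadForm_Dmat_succ_le hb hbc hbM hM hx)
  rw [Fintype.card_fin] at htrace
  have hlog := log_det_sub_trace_div_le_log_det_parallelSum
    (posDef_Dmat hb hbc (x := x) (t + 1)) hc
  rw [laserPrior]
  linarith [div_le_div_of_nonneg_right htrace hc.le]

theorem laserLoss_add_quadForm_laserPrior_le (hb : 0 < b) (hbc : b < c) (hbM : b + X ^ 2 ≤ M)
    (hM : M * c / (M + c) + X ^ 2 ≤ M) {t : ℕ}
    (hx : ∀ s < t, x (s + 1) ⬝ᵥ x (s + 1) ≤ X ^ 2) (hy : ∀ s < t, |y (s + 1)| ≤ Y)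
    (u : ℕ → Fin d → ℝ) :
    laserLoss d b c x y t +
        quadForm (laserPrior d b c x t) (u (t + 1) - laserMean d b c x y t) ≤
      b * (u 1 ⬝ᵥ u 1) + c * drift u t + comparatorLoss x y u t +
        Y ^ 2 * (Real.log (laserPrior d b c x t).det - d * Real.log b + t * (d * M / c)) := by
  induction t with
  | zero =>
    have hlog : Real.log (b • (1 : Matrix (Fin d) (Fin d) ℝ)).det = d * Real.log b := by
      rw [log_det_smul (by simp) hb.ne', Fintype.card_fin, det_one, Real.log_one, add_zero]
    rw [laserPrior_zero hb hbc, quadForm_smul_one, hlog]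
    simp [laserLoss, laserMean, evec, drift, comparatorLoss]
  | succ t ih =>
    have hprev := ih (fun s hs => hx s (Nat.lt_succ_of_lt hs)) fun s hs =>
      hy s (Nat.lt_succ_of_lt hs)
    have hround := laser_round_le (x := x) hb hbc (hy t t.lt_succ_self) (u (t + 1))
    have hmove := quadForm_laserPrior_sub_le (x := x) hb hbc (t + 1) (u (t + 1)) (u (t + 2))
      (laserMean d b c x y (t + 1))
    have hlog := mul_le_mul_of_nonneg_left
      (log_det_Dmat_succ_le hb hbc hbM hM fun s hs => hx s (Nat.lt_succ_of_le hs)) (sq_nonneg Y)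
    simp only [laserLoss, drift, comparatorLoss, Finset.sum_range_succ] at hprev ⊢
    push_cast
    linarith

theorem laserLoss_le (hb : 0 < b) (hbc : b < c) (hbM : b + X ^ 2 ≤ M)
    (hM : M * c / (M + c) + X ^ 2 ≤ M) {t : ℕ}
    (hx : ∀ s < t, x (s + 1) ⬝ᵥ x (s + 1) ≤ X ^ 2) (hy : ∀ s < t + 1, |y (s + 1)| ≤ Y)
    (u : ℕ → Fin d → ℝ) :
    laserLoss d b c x y (t + 1) ≤
      b * (u 1 ⬝ᵥ u 1) + c * drift u t + comparatorLoss x y u (t + 1) +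
        Y ^ 2 * Real.log (b⁻¹ • Dmat d b c x (t + 1)).det + Y ^ 2 * (t * (d * M / c)) := by
  have hD : (Dmat d b c x (t + 1)).PosDef := posDef_Dmat hb hbc _
  have hprev := laserLoss_add_quadForm_laserPrior_le hb hbc hbM hM hx
    (fun s hs => hy s (Nat.lt_succ_of_lt hs)) u
  have hround := laser_round_le (x := x) hb hbc (hy t t.lt_succ_self) (u (t + 1))
  have hlast := quadForm_nonneg hD.posSemidef (u (t + 1) - laserMean d b c x y (t + 1))
  rw [log_det_smul hD.det_pos.ne' (inv_ne_zero hb.ne'), Fintype.card_fin, Real.log_inv]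
  simp only [laserLoss, comparatorLoss, Finset.sum_range_succ] at hprev ⊢
  linarith

end Laser

section Tuning

theorem le_div_rpow_two_thirds_of_le_div_rpow {a V μ : ℝ} (hV : 0 < V) (hμ : 0 < μ)
    (h : V ≤ a / μ ^ ((3 : ℝ) / 2)) : μ ≤ (a / V) ^ ((2 : ℝ) / 3) := by
  have hμV : μ ^ ((3 : ℝ) / 2) ≤ a / V := by
    rw [le_div_iff₀ (by positivity)] at h
    rw [le_div_iff₀ hV]
    linarith
  rw [show (2 : ℝ) / 3 = (3 / 2)⁻¹ by norm_num,
    Real.le_rpow_inv_iff_of_pos hμ.le ((by positivity : 0 ≤ μ ^ ((3 : ℝ) / 2)).trans hμV)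
      (by norm_num)]
  exact hμV

theorem rpow_two_thirds_mul_sqrt {r : ℝ} (hr : 0 < r) :
    r ^ ((2 : ℝ) / 3) * √(r ^ ((2 : ℝ) / 3)) = r := by
  rw [Real.sqrt_eq_rpow, ← Real.rpow_mul hr.le, ← Real.rpow_add hr]
  norm_num

theorem mul_div_rpow_two_thirds_mul {a r V : ℝ} (ha : 0 ≤ a) (hr : 0 ≤ r) (hV : 0 < V) :
    (r * a / V) ^ ((2 : ℝ) / 3) * V =
      a ^ ((2 : ℝ) / 3) * r ^ ((2 : ℝ) / 3) * V ^ ((1 : ℝ) / 3) := by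
  have hsplit : V ^ ((1 : ℝ) / 3) * V ^ ((2 : ℝ) / 3) = V := by
    rw [← Real.rpow_add hV]
    norm_num
  rw [Real.div_rpow (by positivity) hV.le, div_mul_eq_mul_div, div_eq_iff (by positivity),
    mul_assoc, hsplit, Real.mul_rpow hr ha, mul_comm (r ^ _)]

theorem mul_div_add_sq_le_sqrt {X c : ℝ} (hX : 0 < X) (hc : X ^ 2 ≤ c) :
    √(8 * X ^ 2 * c) * c / (√(8 * X ^ 2 * c) + c) + X ^ 2 ≤ √(8 * X ^ 2 * c) := by
  have hc0 : 0 < c := lt_of_lt_of_le (by positivity) hc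
  have hsq : √(8 * X ^ 2 * c) ^ 2 = 8 * X ^ 2 * c := Real.sq_sqrt (by positivity)
  have hle : √(8 * X ^ 2 * c) ≤ 7 * c := Real.sqrt_le_iff.2 ⟨by positivity, by nlinarith⟩
  rw [← le_sub_iff_add_le, div_le_iff₀ (by positivity)]
  nlinarith [mul_le_mul_of_nonneg_left hle (sq_nonneg X)]

theorem add_sq_le_sqrt {b c X : ℝ} (hX : 0 < X) (hc : (b + X ^ 2) ^ 2 / (8 * X ^ 2) ≤ c) :
    b + X ^ 2 ≤ √(8 * X ^ 2 * c) :=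
  Real.le_sqrt_of_sq_le ((div_le_iff₀' (by positivity)).1 hc)

theorem mul_sqrt_div_eq_of_mul_sqrt {k X c V : ℝ} (hX : 0 ≤ X) (hc : 0 < c)
    (h : c * √c * V = √2 * k * X) : k * (√(8 * X ^ 2 * c) / c) = 2 * (c * V) := by
  have hsqrt : √(8 * X ^ 2 * c) = 2 * √2 * X * √c := by
    rw [show 8 * X ^ 2 * c = (2 * X) ^ 2 * (2 * c) by ring, Real.sqrt_mul (by positivity),
      Real.sqrt_sq (by positivity), Real.sqrt_mul (by norm_num)]
    ring
  have hsq : √c * √c = c := Real.mul_self_sqrt hc.le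
  rw [hsqrt, mul_div_assoc', div_eq_iff hc.ne']
  linear_combination (-2 * √c) * h + 2 * c * V * hsq

end Tuning

theorem laser_regret_low_drift_general {d T : ℕ} {x u : ℕ → Fin d → ℝ} {y : ℕ → ℝ}
    {X Y V ε b c μ : ℝ} (hX : 0 < X)
    (hx : ∀ t < T, x (t + 1) ⬝ᵥ x (t + 1) ≤ X ^ 2) (hy : ∀ t < T, |y (t + 1)| ≤ Y)
    (hV : V = drift u (T - 1)) (hVpos : 0 < V) (hε0 : 0 < ε) (hε1 : ε < 1)
    (hc : c = (√2 * T * Y ^ 2 * d * X / V) ^ ((2 : ℝ) / 3)) (hb : b = ε * c)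
    (hμ : μ = max ((9 / 8) * X ^ 2) ((b + X ^ 2) ^ 2 / (8 * X ^ 2)))
    (hlow : V ≤ T * (√2 * Y ^ 2 * d * X) / μ ^ ((3 : ℝ) / 2)) :
    laserLoss d b c x y T ≤
      b * (u 1 ⬝ᵥ u 1) +
        3 * (√2 * Y ^ 2 * d * X) ^ ((2 : ℝ) / 3) * (T : ℝ) ^ ((2 : ℝ) / 3) * V ^ ((1 : ℝ) / 3) +
        comparatorLoss x y u T + Y ^ 2 * Real.log (b⁻¹ • Dmat d b c x T).det := by
  have hμ0 : 0 < μ := hμ ▸ lt_max_of_lt_left (by positivity)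
  rw [show √2 * T * Y ^ 2 * d * X = T * (√2 * Y ^ 2 * d * X) by ring] at hc
  have hμc : μ ≤ c := hc ▸ le_div_rpow_two_thirds_of_le_div_rpow hVpos hμ0 hlow
  have hc0 : 0 < c := hμ0.trans_le hμc
  have ha : 0 < T * (√2 * Y ^ 2 * d * X) :=
    (div_pos_iff_of_pos_right (by positivity)).1 (hVpos.trans_le hlow)
  obtain ⟨t, rfl⟩ : ∃ t, T = t + 1 :=
    Nat.exists_eq_succ_of_ne_zero (by rintro rfl; simp at ha)
  obtain ⟨hμX, hμb⟩ := max_le_iff.1 (hμ ▸ hμc)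
  have hloss := laserLoss_le (hb ▸ mul_pos hε0 hc0) (hb ▸ mul_lt_of_lt_one_left hc0 hε1)
    (add_sq_le_sqrt hX hμb) (mul_div_add_sq_le_sqrt hX (by nlinarith [sq_nonneg X]))
    (fun s hs => hx s (Nat.lt_succ_of_lt hs)) hy u
  have hdrift : c * V = (√2 * Y ^ 2 * d * X) ^ ((2 : ℝ) / 3) *
      ((t + 1 : ℕ) : ℝ) ^ ((2 : ℝ) / 3) * V ^ ((1 : ℝ) / 3) := by
    rw [hc, mul_div_rpow_two_thirds_mul (by positivity) (by positivity) hVpos]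
  have hrate : c * √c * V = √2 * ((t + 1 : ℕ) * Y ^ 2 * d) * X := by
    rw [hc, rpow_two_thirds_mul_sqrt (div_pos ha hVpos), div_mul_cancel₀ _ hVpos.ne']
    ring
  have hlogdet : Y ^ 2 * (t * (d * √(8 * X ^ 2 * c) / c)) ≤ 2 * (c * V) := by
    calc Y ^ 2 * (t * (d * √(8 * X ^ 2 * c) / c))
        = t * Y ^ 2 * d * (√(8 * X ^ 2 * c) / c) := by ring
      _ ≤ (t + 1 : ℕ) * Y ^ 2 * d * (√(8 * X ^ 2 * c) / c) := by gcongr; exact t.le_succ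
      _ = 2 * (c * V) := mul_sqrt_div_eq_of_mul_sqrt hX.le hc0 hrate
  rw [Nat.add_sub_cancel] at hV
  rw [← hV] at hloss
  linarith

theorem laser_regret_low_drift (d : ℕ) (hd : 1 ≤ d)
    (x : ℕ → Fin d → ℝ) (y : ℕ → ℝ) (X Y : ℝ) (hX : 0 < X)
    (hx : ∀ t : ℕ, x (t + 1) ⬝ᵥ x (t + 1) ≤ X ^ 2)
    (hy : ∀ t : ℕ, |y (t + 1)| ≤ Y)
    (T : ℕ) (hT : 1 ≤ T) (u : ℕ → Fin d → ℝ) (V : ℝ)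
    (hV : V = ∑ t ∈ Finset.range (T - 1),
        (u (t + 2) - u (t + 1)) ⬝ᵥ (u (t + 2) - u (t + 1)))
    (hVpos : 0 < V)
    (ε : ℝ) (hε0 : 0 < ε) (hε1 : ε < 1)
    (b c μ : ℝ)
    (hc : c = (Real.sqrt 2 * T * Y ^ 2 * d * X / V) ^ ((2 : ℝ) / 3))
    (hb : b = ε * c)
    (hμ : μ = max ((9 / 8) * X ^ 2) ((b + X ^ 2) ^ 2 / (8 * X ^ 2)))
    (hlow : V ≤ T * (Real.sqrt 2 * Y ^ 2 * d * X) / μ ^ ((3 : ℝ) / 2)) :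
    laserLoss d b c x y T ≤
      b * (u 1 ⬝ᵥ u 1)
        + 3 * (Real.sqrt 2 * Y ^ 2 * d * X) ^ ((2 : ℝ) / 3)
            * (T : ℝ) ^ ((2 : ℝ) / 3) * V ^ ((1 : ℝ) / 3)
        + (ε / (1 - ε)) * Y ^ 2 * d
        + ∑ t ∈ Finset.range T, (y (t + 1) - u (t + 1) ⬝ᵥ x (t + 1)) ^ 2
        + Y ^ 2 * Real.log ((b⁻¹ • Dmat d b c x T).det) := by
  have hslack : 0 ≤ ε / (1 - ε) * Y ^ 2 * d := by have := sub_pos.2 hε1; positivity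
  have hsharp := laser_regret_low_drift_general hX (fun t _ => hx t) (fun t _ => hy t) hV hVpos
    hε0 hε1 hc hb hμ hlow
  rw [comparatorLoss] at hsharp
  linarith
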